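/- arXiv:2003.06469 — 6 statements merged into one kernel-verified Lean document; each statement's English description precedes it below -/
import Mathlib

section
/- Let 𝒳 be a compact metrizable topological space, 𝕀 ⊂ ℝ an open set, and F : 𝒳 × 𝕀 → ℝ a continuous function that is differentiable in t ∈ 𝕀 for each fixed x, such that the partial derivative ∂ₜF is continuous on 𝒳 × 𝕀 and sup_{(x,t) ∈ 𝒳×𝕀} |∂ₜF(x,t)| < ∞. Define V(t) := min_{x ∈ 𝒳} F(x,t), and suppose that for every t ∈ 𝕀 there is a unique x*(t) ∈ 𝒳 with F(x*(t),t) = V(t). Then the map t ↦ x*(t) is continuous, V is continuously differentiable on 𝕀, and V'(t) = ∂ₜF(x*(t),t) for all t ∈ 𝕀. -/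
open Filter Topology

/-- Berge: a selection of unique minimizers over a compact space is continuous. -/
theorem continuousOn_of_unique_minimizer {X T : Type*} [TopologicalSpace X] [CompactSpace X]
    [TopologicalSpace T] {I : Set T} {F : X × T → ℝ} {m : T → X}
    (hF : ContinuousOn F (Set.univ ×ˢ I))
    (hm : ∀ t ∈ I, ∀ x, F (m t, t) ≤ F (x, t))
    (huniq : ∀ t ∈ I, ∀ x, F (x, t) ≤ F (m t, t) → x = m t) :
    ContinuousOn m I := by
  intro t ht
  refine tendsto_nhds_of_unique_mapClusterPt fun x hx => huniq t ht x ?_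
  obtain ⟨U, hU, hUx⟩ := mapClusterPt_iff_ultrafilter.1 hx
  have hUt : Tendsto (fun s => s) (U : Filter T) (𝓝 t) := hU.trans nhdsWithin_le_nhds
  have hUI : ∀ᶠ s in (U : Filter T), s ∈ I := hU self_mem_nhdsWithin
  have key : ∀ (f : T → X) (y : X), Tendsto f U (𝓝 y) →
      Tendsto (fun s => F (f s, s)) U (𝓝 (F (y, t))) := fun f y hf =>
    (hF (y, t) ⟨trivial, ht⟩).tendsto.comp <|
      tendsto_nhdsWithin_iff.2 ⟨hf.prodMk_nhds hUt, hUI.mono fun s hs => ⟨trivial, hs⟩⟩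
  exact le_of_tendsto_of_tendsto (key m x hUx) (key _ (m t) tendsto_const_nhds)
    (hUI.mono fun s hs => hm s hs (m t))

/-- If the partial derivative is continuous at `(x₀, t₀)`, then the first-order expansion in `t`
holds uniformly for `x` near `x₀`. -/
theorem eventually_abs_sub_sub_mul_le {X : Type*} [TopologicalSpace X] {F G : X × ℝ → ℝ}
    {x₀ : X} {t₀ : ℝ} (hG : ∀ᶠ t in 𝓝 t₀, ∀ x, HasDerivAt (fun s => F (x, s)) (G (x, t)) t)
    (hGcont : ContinuousAt G (x₀, t₀)) {ε : ℝ} (hε : 0 < ε) :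
    ∀ᶠ p in 𝓝 x₀ ×ˢ 𝓝 t₀,
      |F (p.1, p.2) - F (p.1, t₀) - (p.2 - t₀) * G (x₀, t₀)| ≤ ε * |p.2 - t₀| := by
  have hclose : ∀ᶠ p in 𝓝 x₀ ×ˢ 𝓝 t₀, |G p - G (x₀, t₀)| < ε := by
    rw [← nhds_prod_eq]
    exact hGcont.eventually (Metric.ball_mem_nhds _ hε)
  obtain ⟨P, hP, Q, hQ, hPQ⟩ := eventually_prod_iff.1 hclose
  obtain ⟨δ, hδ, hball⟩ := Metric.eventually_nhds_iff_ball.1 (hQ.and hG)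
  refine (hP.prod_mk (Metric.ball_mem_nhds t₀ hδ)).mono fun p hp => ?_
  have hderiv : ∀ s ∈ Metric.ball t₀ δ, HasDerivWithinAt
      (fun s => F (p.1, s) - s * G (x₀, t₀)) (G (p.1, s) - G (x₀, t₀)) (Metric.ball t₀ δ) s :=
    fun s hs => by
      simpa using (((hball s hs).2 p.1).fun_sub
        ((hasDerivAt_id' s).mul_const (G (x₀, t₀)))).hasDerivWithinAt
  have h := (convex_ball t₀ δ).norm_image_sub_le_of_norm_hasDerivWithin_le hderiv
    (fun s hs => (hPQ hp.1 (hball s hs).1).le) (Metric.mem_ball_self hδ) hp.2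
  rw [Real.norm_eq_abs, Real.norm_eq_abs] at h
  convert h using 2
  ring

/-- **Theorem 5.7 (envelope theorem).** Let `𝒳` be a compact metrizable space, `I ⊆ ℝ` open,
`F : 𝒳 × I → ℝ` continuous and differentiable in `t` with continuous, uniformly bounded partial
derivative `G = ∂ₜF`.  If `V t = min_{x ∈ 𝒳} F (x, t)` and the minimizer `x* t` is unique for
every `t ∈ I`, then `x*` is continuous, `V` is C¹ on `I` and `V' t = G (x* t, t)`. -/
theorem stmt_4 {X : Type*} [TopologicalSpace X] [CompactSpace X] [TopologicalSpace.MetrizableSpace X]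
    [Nonempty X]
    (I : Set ℝ) (hI : IsOpen I)
    (F : X × ℝ → ℝ) (G : X × ℝ → ℝ)
    (hF : ContinuousOn F (Set.univ ×ˢ I))
    (hG : ∀ x : X, ∀ t ∈ I, HasDerivAt (fun s => F (x, s)) (G (x, t)) t)
    (hGcont : ContinuousOn G (Set.univ ×ˢ I))
    (hGbdd : ∃ M : ℝ, ∀ x : X, ∀ t ∈ I, |G (x, t)| ≤ M)
    (V : ℝ → ℝ) (xstar : ℝ → X)
    (hmin : ∀ t ∈ I, IsLeast (Set.range fun x : X => F (x, t)) (V t))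
    (hstar : ∀ t ∈ I, F (xstar t, t) = V t)
    (huniq : ∀ t ∈ I, ∀ x : X, F (x, t) = V t → x = xstar t) :
    ContinuousOn xstar I ∧ (∀ t ∈ I, HasDerivAt V (G (xstar t, t)) t) ∧
      ContinuousOn (fun t => G (xstar t, t)) I := by
  have hle : ∀ t ∈ I, ∀ x, V t ≤ F (x, t) := fun t ht x => (hmin t ht).2 ⟨x, rfl⟩
  have hcont : ContinuousOn xstar I :=
    continuousOn_of_unique_minimizer hF (fun t ht x => (hstar t ht).trans_le (hle t ht x))
      fun t ht x hx => huniq t ht x ((hx.trans_eq (hstar t ht)).antisymm (hle t ht x))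
  refine ⟨hcont, fun t ht => ?_, hGcont.comp (hcont.prodMk continuousOn_id)
    fun t ht => ⟨trivial, ht⟩⟩
  have hIt : I ∈ 𝓝 t := hI.mem_nhds ht
  rw [hasDerivAt_iff_isLittleO, Asymptotics.isLittleO_iff]
  intro ε hε
  have hexp := eventually_abs_sub_sub_mul_le (x₀ := xstar t)
    (mem_of_superset hIt fun s hs x => hG x s hs)
    (hGcont.continuousAt ((isOpen_univ.prod hI).mem_nhds ⟨trivial, ht⟩)) hε
  have hmoving := ((hcont.continuousAt hIt).tendsto.prodMk tendsto_id).eventually hexp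
  have hfixed := ((tendsto_const_nhds (x := xstar t) (f := 𝓝 t)).prodMk tendsto_id).eventually hexp
  filter_upwards [hmoving, hfixed, hIt] with s hs hs' hsI
  simp only [id, Real.norm_eq_abs, smul_eq_mul] at hs hs' ⊢
  rw [abs_le] at hs hs' ⊢
  have := hle s hsI (xstar t)
  have := hle t ht (xstar s)
  have := hstar s hsI
  have := hstar t ht
  constructor <;> linarith
end

section
/- Let n ≥ 1, R > 0, and let U = {x ∈ ℝⁿ : |x| ≥ R}. Let f, g : ℝⁿ → [0,∞) be nonnegative functions that are C² on a neighborhood of U, and let K, H : U → ℝ be measurable functions such that: (i) Δf(x) ≤ K(x)f(x) for all x ∈ U; (ii) Δg(x) ≥ H(x)g(x) for all x ∈ U; (iii) f(x) → 0 and g(x) → 0 as |x| → +∞; (iv) H(x) ≥ K(x) ≥ 0 for all x ∈ U; (v) f(x) ≥ g(x) for all x with |x| = R. Then f(x) ≥ g(x) for all x ∈ U. -/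
open MeasureTheory

/-- The Laplacian of `f : ℝⁿ → ℝ`, as the sum of the repeated directional derivatives
along the coordinate directions. -/
noncomputable def laplacian {n : ℕ} (f : EuclideanSpace ℝ (Fin n) → ℝ)
    (x : EuclideanSpace ℝ (Fin n)) : ℝ :=
  ∑ i : Fin n, fderiv ℝ (fun y => fderiv ℝ f y (EuclideanSpace.single i 1)) x
    (EuclideanSpace.single i 1)

open Filter Topology

section Laplacian

variable {n : ℕ} {u v : EuclideanSpace ℝ (Fin n) → ℝ} {x : EuclideanSpace ℝ (Fin n)}

theorem differentiableAt_fderiv_apply {E : Type*} [NormedAddCommGroup E] [NormedSpace ℝ E]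
    {u : E → ℝ} {x : E} (hu : ContDiffAt ℝ 2 u x) (e : E) :
    DifferentiableAt ℝ (fun y => fderiv ℝ u y e) x :=
  ((hu.fderiv_right (m := 1) (by norm_num)).differentiableAt (by norm_num)).clm_apply
    (differentiableAt_const e)

theorem eventually_differentiableAt_of_contDiffAt {E : Type*} [NormedAddCommGroup E]
    [NormedSpace ℝ E] {u : E → ℝ} {x : E} (hu : ContDiffAt ℝ 2 u x) :
    ∀ᶠ y in 𝓝 x, DifferentiableAt ℝ u y :=
  (hu.eventually (by simp)).mono fun _ hy => hy.differentiableAt (by norm_num)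

theorem laplacian_add (hu : ContDiffAt ℝ 2 u x) (hv : ContDiffAt ℝ 2 v x) :
    laplacian (fun y => u y + v y) x = laplacian u x + laplacian v x := by
  simp only [laplacian, ← Finset.sum_add_distrib]
  refine Finset.sum_congr rfl fun i _ => ?_
  have h : (fun y => fderiv ℝ (fun z => u z + v z) y (EuclideanSpace.single i 1)) =ᶠ[𝓝 x]
      fun y => fderiv ℝ u y (EuclideanSpace.single i 1) +
        fderiv ℝ v y (EuclideanSpace.single i 1) := by
    filter_upwards [eventually_differentiableAt_of_contDiffAt hu,
      eventually_differentiableAt_of_contDiffAt hv] with y hy hy'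
    rw [fderiv_fun_add hy hy', add_apply]
  rw [h.fderiv_eq, fderiv_fun_add (differentiableAt_fderiv_apply hu _)
    (differentiableAt_fderiv_apply hv _), add_apply]

theorem laplacian_neg : laplacian (fun y => -u y) x = -laplacian u x := by
  simp [laplacian, fderiv_fun_neg]

theorem laplacian_const_mul_norm_sq (c : ℝ) :
    laplacian (fun y : EuclideanSpace ℝ (Fin n) => c * ‖y‖ ^ 2) x = 2 * n * c := by
  have h (i : Fin n) : (fun y : EuclideanSpace ℝ (Fin n) =>
      fderiv ℝ (fun z : EuclideanSpace ℝ (Fin n) => c * ‖z‖ ^ 2) y (EuclideanSpace.single i 1)) =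
      fun y => (2 * c) * EuclideanSpace.proj (𝕜 := ℝ) i y := by
    funext y
    rw [((hasStrictFDerivAt_norm_sq y).hasFDerivAt.const_mul c).fderiv]
    simp [EuclideanSpace.inner_single_right]
    ring
  have h' (i : Fin n) : fderiv ℝ (fun y : EuclideanSpace ℝ (Fin n) =>
      (2 * c) * EuclideanSpace.proj (𝕜 := ℝ) i y) x (EuclideanSpace.single i 1) = 2 * c := by
    rw [((EuclideanSpace.proj (𝕜 := ℝ) i).hasFDerivAt.const_mul (2 * c)).fderiv]
    simp
  simp only [laplacian, h, h', Finset.sum_const, Finset.card_univ, Fintype.card_fin, nsmul_eq_mul]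
  ring

theorem IsLocalMax.deriv_deriv_nonpos {φ : ℝ → ℝ} {t : ℝ} (h : IsLocalMax φ t)
    (hc : ContinuousAt φ t) : deriv (deriv φ) t ≤ 0 := by
  by_contra! hpos
  have hmin := isLocalMin_of_deriv_deriv_pos hpos h.deriv_eq_zero hc
  have hconst : φ =ᶠ[𝓝 t] fun _ => φ t := by
    filter_upwards [h, hmin] with s h₁ h₂ using le_antisymm h₁ h₂
  have : deriv (deriv φ) t = 0 := by
    rw [hconst.deriv.deriv_eq]
    simp
  exact hpos.ne' this

theorem IsLocalMax.laplacian_nonpos (h : IsLocalMax u x) (hu : ContDiffAt ℝ 2 u x) :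
    laplacian u x ≤ 0 := by
  refine Finset.sum_nonpos fun i _ => ?_
  set e : EuclideanSpace ℝ (Fin n) := EuclideanSpace.single i 1
  have hl (t : ℝ) : HasDerivAt (fun s : ℝ => x + s • e) e t := by
    simpa using ((hasDerivAt_id t).smul_const e).const_add x
  have h0 : x + (0 : ℝ) • e = x := by simp
  have hlim : Tendsto (fun s : ℝ => x + s • e) (𝓝 0) (𝓝 x) := by
    simpa [h0] using (hl 0).continuousAt.tendsto
  have hd : deriv (fun s : ℝ => u (x + s • e)) =ᶠ[𝓝 0] fun s => fderiv ℝ u (x + s • e) e := by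
    filter_upwards [hlim.eventually (eventually_differentiableAt_of_contDiffAt hu)] with s hs
    exact (hs.hasFDerivAt.comp_hasDerivAt s (hl s)).deriv
  have hdd : deriv (deriv fun s : ℝ => u (x + s • e)) 0 =
      fderiv ℝ (fun y => fderiv ℝ u y e) x e := by
    rw [hd.deriv_eq]
    have := (differentiableAt_fderiv_apply hu e).hasFDerivAt
    rw [← h0] at this
    simpa [h0, Function.comp_def] using (this.comp_hasDerivAt 0 (hl 0)).deriv
  rw [← hdd]
  refine IsLocalMax.deriv_deriv_nonpos ?_ ?_
  · simpa [IsLocalMax, IsMaxFilter] using hlim.eventually h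
  · exact ContinuousAt.comp (f := fun s : ℝ => x + s • e) (by rw [h0]; exact hu.continuousAt)
      (hl 0).continuousAt

/-- A function that tends to zero at infinity, is nonpositive on the sphere of radius `R` and is
subharmonic wherever it is positive outside that sphere, is nonpositive outside that sphere. -/
theorem nonpos_of_laplacian_nonneg (hn : 1 ≤ n) {R : ℝ}
    (hu : ∀ y, R ≤ ‖y‖ → ContDiffAt ℝ 2 u y) (hΔ : ∀ y, R ≤ ‖y‖ → 0 < u y → 0 ≤ laplacian u y)
    (hlim : Tendsto u (cocompact _) (𝓝 0)) (hR : ∀ y, ‖y‖ = R → u y ≤ 0) (hx : R ≤ ‖x‖) :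
    u x ≤ 0 := by
  by_contra! hpos
  obtain ⟨r, hr⟩ : ∃ r, ∀ y, r < ‖y‖ → u y < u x / 2 := by
    rw [← Metric.cobounded_eq_cocompact] at hlim
    obtain ⟨r, -, hr⟩ := (Metric.hasBasis_cobounded_compl_closedBall
      (0 : EuclideanSpace ℝ (Fin n))).eventually_iff.mp
        (hlim.eventually (gt_mem_nhds (half_pos hpos)))
    exact ⟨r, fun y hy => hr (by simpa using hy)⟩
  set ρ := max r ‖x‖ + 1
  have hrρ : r < ρ := (le_max_left _ _).trans_lt (lt_add_one _)
  have hxρ : ‖x‖ < ρ := (le_max_right _ _).trans_lt (lt_add_one _)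
  have hρ : 0 < ρ := (norm_nonneg x).trans_lt hxρ
  set ε := u x / (4 * ρ ^ 2)
  have hε : 0 < ε := by positivity
  have hερ : ε * ρ ^ 2 = u x / 4 := by simp only [ε]; field_simp
  set A : Set (EuclideanSpace ℝ (Fin n)) := {y | R ≤ ‖y‖} ∩ Metric.closedBall 0 ρ
  have hA : IsCompact A :=
    (isCompact_closedBall _ _).inter_left (isClosed_le continuous_const continuous_norm)
  have hq (y : EuclideanSpace ℝ (Fin n)) :
      ContDiffAt ℝ 2 (fun y : EuclideanSpace ℝ (Fin n) => ε * ‖y‖ ^ 2) y :=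
    contDiffAt_const.mul (contDiff_norm_sq ℝ).contDiffAt
  obtain ⟨y, ⟨hyR, hyρ⟩, hmax⟩ := hA.exists_isMaxOn ⟨x, hx, by simpa using hxρ.le⟩
    (f := fun y => u y + ε * ‖y‖ ^ 2)
    fun z hz => ((hu z hz.1).add (hq z)).continuousAt.continuousWithinAt
  replace hyρ : ‖y‖ ≤ ρ := by simpa using hyρ
  have hyx : u x + ε * ‖x‖ ^ 2 ≤ u y + ε * ‖y‖ ^ 2 := hmax ⟨hx, by simpa using hxρ.le⟩
  have hylarge : u x / 2 < u y := by
    have h₁ : ε * ‖y‖ ^ 2 ≤ ε * ρ ^ 2 := by gcongr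
    have h₂ : 0 ≤ ε * ‖x‖ ^ 2 := by positivity
    linarith
  have hypos : 0 < u y := (half_pos hpos).trans hylarge
  have hyR' : R < ‖y‖ := lt_of_le_of_ne hyR fun h => (hR y h.symm).not_gt hypos
  have hyρ' : ‖y‖ < ρ := hyρ.lt_of_ne fun h => (hr y (h ▸ hrρ)).not_gt hylarge
  have hnhds : A ∈ 𝓝 y := by
    filter_upwards [continuous_norm.continuousAt.eventually (lt_mem_nhds hyR'),
      continuous_norm.continuousAt.eventually (gt_mem_nhds hyρ')] with z h₁ h₂
    exact ⟨h₁.le, by simpa using h₂.le⟩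
  have hle := (hmax.isLocalMax hnhds).laplacian_nonpos ((hu y hyR).add (hq y))
  rw [laplacian_add (hu y hyR) (hq y), laplacian_const_mul_norm_sq] at hle
  have hn' : (0 : ℝ) < n := by exact_mod_cast hn
  have : 0 < 2 * n * ε := by positivity
  linarith [hΔ y hyR hypos]

end Laplacian

/-- **Theorem 6.5 (comparison principle on the exterior of a ball).**
If, on `U = {|x| ≥ R}`, `f, g ≥ 0` are C² (on a neighborhood of `U`) with
`Δf ≤ K f`, `Δg ≥ H g`, `f, g → 0` at infinity, `H ≥ K ≥ 0` on `U`, and `f ≥ g` on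
`{|x| = R}`, then `f ≥ g` on all of `U`. -/
theorem stmt_9 {n : ℕ} (hn : 1 ≤ n) (R : ℝ) (hR : 0 < R)
    (f g K H : EuclideanSpace ℝ (Fin n) → ℝ)
    (U : Set (EuclideanSpace ℝ (Fin n))) (hU : U = {x | R ≤ ‖x‖})
    (hf0 : ∀ x, 0 ≤ f x) (hg0 : ∀ x, 0 ≤ g x)
    (hfC2 : ∃ O, IsOpen O ∧ U ⊆ O ∧ ContDiffOn ℝ 2 f O)
    (hgC2 : ∃ O, IsOpen O ∧ U ⊆ O ∧ ContDiffOn ℝ 2 g O)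
    (hKmeas : Measurable fun x : U => K x.1)
    (hHmeas : Measurable fun x : U => H x.1)
    (hi : ∀ x ∈ U, laplacian f x ≤ K x * f x)
    (hii : ∀ x ∈ U, H x * g x ≤ laplacian g x)
    (hf_decay : Filter.Tendsto f (Filter.cocompact _) (nhds 0))
    (hg_decay : Filter.Tendsto g (Filter.cocompact _) (nhds 0))
    (hKH : ∀ x ∈ U, K x ≤ H x) (hK0 : ∀ x ∈ U, 0 ≤ K x)
    (hbdry : ∀ x : EuclideanSpace ℝ (Fin n), ‖x‖ = R → g x ≤ f x) :
    ∀ x ∈ U, g x ≤ f x := by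
  subst hU
  obtain ⟨O, hO, hUO, hf⟩ := hfC2
  obtain ⟨O', hO', hUO', hg⟩ := hgC2
  have hfa (y) (hy : R ≤ ‖y‖) : ContDiffAt ℝ 2 f y := hf.contDiffAt (hO.mem_nhds (hUO hy))
  have hga (y) (hy : R ≤ ‖y‖) : ContDiffAt ℝ 2 g y := hg.contDiffAt (hO'.mem_nhds (hUO' hy))
  intro x hx
  have key : g x + -f x ≤ 0 := by
    refine nonpos_of_laplacian_nonneg (u := fun y => g y + -f y) hn
      (fun y hy => (hga y hy).add (hfa y hy).neg) (fun y hy hpos => ?_)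
      (by simpa using hg_decay.add hf_decay.neg) (fun y hy => by linarith [hbdry y hy]) hx
    rw [laplacian_add (hga y hy) (hfa y hy).neg, laplacian_neg]
    have h₁ : K y * g y ≤ H y * g y := mul_le_mul_of_nonneg_right (hKH y hy) (hg0 y)
    have h₂ : 0 ≤ K y * (g y + -f y) := mul_nonneg (hK0 y hy) hpos.le
    linarith [hi y hy, hii y hy]
  linarith
end

section
/- Let n ≥ 1, let ε, e₁, e₃ > 0 and e₂ ≥ 0, and let V̄ : [0,∞) → (0,∞) be a positive C¹ increasing function with V̄(r) ≥ e₁ r^{2+ε} − e₂ and V̄'(r) ≤ e₃ V̄(r)^{3/2} for all r ≥ 0; set V(x) := V̄(|x|). Let φ₀ ∈ C²(ℝⁿ) be strictly positive with φ₀(x) → 0 as |x| → ∞, and suppose there exist R ≥ 0 and constants C₁ > 0, c₂ > 0, c₃ ≥ 0 such that (c₂V(x) − c₃)·φ₀(x) ≤ Δφ₀(x) ≤ C₁·V(x)·φ₀(x) for all |x| ≥ R. Then there exist R' ≥ R, constants a₁, a₂ > 0 and a₃, a₄ ∈ ℝ such that for all x with |x| ≥ R': exp( −a₁ ∫₀^{|x|}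 √(V̄(r)) dr + a₃ ) ≤ φ₀(x)² ≤ exp( −a₂|x|² + a₄ ). -/
open MeasureTheory

open Filter Topology

/-- At a local maximum the second derivative along any direction is nonpositive. -/
theorem IsLocalMax.fderiv_fderiv_apply_nonpos {E : Type*} [NormedAddCommGroup E]
    [NormedSpace ℝ E] {w : E → ℝ} {x : E} (hmax : IsLocalMax w x)
    (hw : ∀ᶠ y in 𝓝 x, DifferentiableAt ℝ w y) (hw' : DifferentiableAt ℝ (fderiv ℝ w) x) (e : E) :
    fderiv ℝ (fun y => fderiv ℝ w y e) x e ≤ 0 := by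
  by_contra! hpos
  set line : ℝ → E := fun t => x + t • e with hline
  have hline0 : line 0 = x := by simp [hline]
  have hline_deriv (t : ℝ) : HasDerivAt line e t := by
    simpa [hline] using ((hasDerivAt_id t).smul_const e).const_add x
  have hline_tendsto : Tendsto line (𝓝 0) (𝓝 x) := by
    simpa [hline0] using (hline_deriv 0).continuousAt.tendsto
  have hderiv : deriv (w ∘ line) =ᶠ[𝓝 0] fun t => fderiv ℝ w (line t) e := by
    filter_upwards [hline_tendsto.eventually hw] with t ht
    exact (ht.hasFDerivAt.comp_hasDerivAt t (hline_deriv t)).deriv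
  have hsecond : deriv (deriv (w ∘ line)) 0 = fderiv ℝ (fun y => fderiv ℝ w y e) x e := by
    rw [hderiv.deriv_eq]
    have hd : DifferentiableAt ℝ (fun y => fderiv ℝ w y e) (line 0) := by
      rw [hline0]; exact hw'.clm_apply (differentiableAt_const e)
    have := (hd.hasFDerivAt.comp_hasDerivAt (0 : ℝ) (hline_deriv 0)).deriv
    rw [hline0] at this
    exact this
  have hmax_line : IsLocalMax (w ∘ line) 0 := by
    have := hline_tendsto.eventually hmax
    simpa [IsLocalMax, IsMaxFilter, hline0] using this
  have hcont : ContinuousAt (w ∘ line) 0 := by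
    refine ContinuousAt.comp ?_ (hline_deriv 0).continuousAt
    rw [hline0]; exact hw.self_of_nhds.continuousAt
  have hmin : IsLocalMin (w ∘ line) 0 :=
    isLocalMin_of_deriv_deriv_pos (hsecond ▸ hpos) hmax_line.deriv_eq_zero hcont
  have hconst : w ∘ line =ᶠ[𝓝 0] fun _ => (w ∘ line) 0 := by
    filter_upwards [hmax_line, hmin] with t h₁ h₂ using le_antisymm h₁ h₂
  have : deriv (deriv (w ∘ line)) 0 = 0 := by
    rw [hconst.deriv.deriv_eq]; simp
  linarith

/-- If `u - v` has a local maximum at `x`, then `Δ u ≤ Δ v` there. -/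
theorem laplacian_le_of_isLocalMax_sub {n : ℕ} {u v : EuclideanSpace ℝ (Fin n) → ℝ}
    {x : EuclideanSpace ℝ (Fin n)} (hmax : IsLocalMax (u - v) x)
    (hu : ∀ᶠ y in 𝓝 x, DifferentiableAt ℝ u y) (hu' : DifferentiableAt ℝ (fderiv ℝ u) x)
    (hv : ∀ᶠ y in 𝓝 x, DifferentiableAt ℝ v y) (hv' : DifferentiableAt ℝ (fderiv ℝ v) x) :
    laplacian u x ≤ laplacian v x := by
  have hfderiv : fderiv ℝ (u - v) =ᶠ[𝓝 x] fderiv ℝ u - fderiv ℝ v := by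
    filter_upwards [hu, hv] with y h₁ h₂ using fderiv_sub h₁ h₂
  refine Finset.sum_le_sum fun i _ => ?_
  set e : EuclideanSpace ℝ (Fin n) := EuclideanSpace.single i 1
  have hnonpos := hmax.fderiv_fderiv_apply_nonpos
    (by filter_upwards [hu, hv] with y h₁ h₂ using h₁.sub h₂)
    ((hu'.sub hv').congr_of_eventuallyEq hfderiv) e
  have hsub : (fun y => fderiv ℝ (u - v) y e) =ᶠ[𝓝 x]
      (fun y => fderiv ℝ u y e) - fun y => fderiv ℝ v y e := by
    filter_upwards [hfderiv] with y hy
    simp [hy]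
  rw [hsub.fderiv_eq, fderiv_sub (hu'.clm_apply (differentiableAt_const e))
    (hv'.clm_apply (differentiableAt_const e))] at hnonpos
  simpa using hnonpos

/-- Comparison principle on the exterior of a ball. -/
theorem le_of_laplacian_lt_on_exterior {n : ℕ} {u v : EuclideanSpace ℝ (Fin n) → ℝ} {ρ : ℝ}
    (hu : Continuous u) (hv : Continuous v)
    (hu₁ : ∀ x, ρ < ‖x‖ → DifferentiableAt ℝ u x)
    (hu₂ : ∀ x, ρ < ‖x‖ → DifferentiableAt ℝ (fderiv ℝ u) x)
    (hv₁ : ∀ x, ρ < ‖x‖ → DifferentiableAt ℝ v x)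
    (hv₂ : ∀ x, ρ < ‖x‖ → DifferentiableAt ℝ (fderiv ℝ v) x)
    (hu_decay : Tendsto u (cocompact _) (𝓝 0)) (hv_nonneg : ∀ x, 0 ≤ v x)
    (hsphere : ∀ x, ‖x‖ = ρ → u x ≤ v x)
    (hlap : ∀ x, ρ < ‖x‖ → v x < u x → laplacian v x < laplacian u x)
    {x : EuclideanSpace ℝ (Fin n)} (hx : ρ ≤ ‖x‖) : u x ≤ v x := by
  by_contra! hlt
  obtain ⟨z, hz, hzmax⟩ := (hu.sub hv).continuousOn.exists_isMaxOn'
    (s := {y | ρ ≤ ‖y‖}) (isClosed_le continuous_const continuous_norm) hx (by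
      have := hu_decay.eventually (gt_mem_nhds (sub_pos.2 hlt))
      filter_upwards [this.filter_mono inf_le_left] with y hy
      simp only [Pi.sub_apply]
      linarith [hv_nonneg y])
  have hzlt : v z < u z := by
    have : u x - v x ≤ u z - v z := hzmax hx
    linarith
  have hzρ : ρ < ‖z‖ := lt_of_le_of_ne hz fun h => hzlt.not_ge (hsphere z h.symm)
  have hnhds : ∀ᶠ y in 𝓝 z, ρ < ‖y‖ := continuous_norm.continuousAt.eventually (lt_mem_nhds hzρ)
  have hlocmax : IsLocalMax (u - v) z := by
    filter_upwards [hnhds] with y hy using hzmax hy.le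
  exact (hlap z hzρ hzlt).not_ge (laplacian_le_of_isLocalMax_sub hlocmax
    (hnhds.mono hu₁) (hu₂ z hzρ) (hnhds.mono hv₁) (hv₂ z hzρ))

/-- The gradient of the norm away from the origin, as a continuous linear form. -/
theorem hasFDerivAt_norm_of_ne_zero {E : Type*} [NormedAddCommGroup E] [InnerProductSpace ℝ E]
    {x : E} (hx : x ≠ 0) : HasFDerivAt (fun y : E => ‖y‖) (‖x‖⁻¹ • innerSL ℝ x) x := by
  have h := ((hasStrictFDerivAt_norm_sq x).hasFDerivAt).sqrt (by positivity)
  have hfun : (fun y : E => √(‖y‖ ^ 2)) = fun y => ‖y‖ := by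
    ext y; exact Real.sqrt_sq (norm_nonneg y)
  rw [hfun, Real.sqrt_sq (norm_nonneg x)] at h
  refine h.congr_fderiv ?_
  ext y
  have : ‖x‖ ≠ 0 := norm_ne_zero_iff.2 hx
  simp
  field_simp

section Radial

variable {E : Type*} [NormedAddCommGroup E] [InnerProductSpace ℝ E]

theorem HasDerivAt.comp_norm {h : ℝ → ℝ} {h' : ℝ} {x : E} (hx : x ≠ 0)
    (hh : HasDerivAt h h' ‖x‖) :
    HasFDerivAt (fun y : E => h ‖y‖) ((h' / ‖x‖) • innerSL ℝ x) x := by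
  have := hh.comp_hasFDerivAt x (hasFDerivAt_norm_of_ne_zero hx)
  rwa [smul_smul, ← div_eq_mul_inv] at this

theorem fderiv_comp_norm_eventuallyEq {h h₁ : ℝ → ℝ} {x : E} (hx : x ≠ 0)
    (hh : ∀ r, 0 < r → HasDerivAt h (h₁ r) r) :
    fderiv ℝ (fun y : E => h ‖y‖) =ᶠ[𝓝 x] fun y => (h₁ ‖y‖ / ‖y‖) • innerSL ℝ y := by
  filter_upwards [isOpen_ne.mem_nhds hx] with y hy
  exact ((hh _ (norm_pos_iff.2 hy)).comp_norm hy).fderiv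

theorem differentiableAt_fderiv_comp_norm {h h₁ : ℝ → ℝ} {h₂ : ℝ} {x : E} (hx : x ≠ 0)
    (hh : ∀ r, 0 < r → HasDerivAt h (h₁ r) r) (hh₁ : HasDerivAt h₁ h₂ ‖x‖) :
    DifferentiableAt ℝ (fderiv ℝ fun y : E => h ‖y‖) x := by
  refine DifferentiableAt.congr_of_eventuallyEq ?_ (fderiv_comp_norm_eventuallyEq hx hh)
  exact ((hh₁.div (hasDerivAt_id _) (norm_ne_zero_iff.2 hx)).comp_norm hx).differentiableAt.smul
    (innerSL ℝ).differentiableAt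

end Radial

/-- The Laplacian of a radial function in polar coordinates. -/
theorem laplacian_comp_norm {n : ℕ} {h h₁ : ℝ → ℝ} {h₂ : ℝ} {x : EuclideanSpace ℝ (Fin n)}
    (hx : x ≠ 0) (hh : ∀ r, 0 < r → HasDerivAt h (h₁ r) r) (hh₁ : HasDerivAt h₁ h₂ ‖x‖) :
    laplacian (fun y => h ‖y‖) x = h₂ + (n - 1) / ‖x‖ * h₁ ‖x‖ := by
  have hr : ‖x‖ ≠ 0 := norm_ne_zero_iff.2 hx
  have hterm (i : Fin n) : fderiv ℝ (fun y => fderiv ℝ (fun y => h ‖y‖) y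
      (EuclideanSpace.single i 1)) x (EuclideanSpace.single i 1) =
      h₁ ‖x‖ / ‖x‖ + (h₂ / ‖x‖ ^ 2 - h₁ ‖x‖ / ‖x‖ ^ 3) * x i ^ 2 := by
    have heq : (fun y => fderiv ℝ (fun y => h ‖y‖) y (EuclideanSpace.single i 1)) =ᶠ[𝓝 x]
        fun y => (h₁ ‖y‖ / ‖y‖) * EuclideanSpace.proj (𝕜 := ℝ) i y := by
      filter_upwards [fderiv_comp_norm_eventuallyEq hx hh] with y hy
      simp [hy, EuclideanSpace.inner_single_right]
    rw [heq.fderiv_eq]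
    have hmul := ((hh₁.div (hasDerivAt_id _) hr).comp_norm hx).mul
      (EuclideanSpace.proj (𝕜 := ℝ) i : EuclideanSpace ℝ (Fin n) →L[ℝ] ℝ).hasFDerivAt
    have := hmul.fderiv
    simp only [Pi.mul_def, Pi.div_apply, id] at this
    rw [this]
    simp [EuclideanSpace.inner_single_right]
    field_simp
  have hnorm : ∑ i, x i ^ 2 = ‖x‖ ^ 2 := (EuclideanSpace.real_norm_sq_eq x).symm
  rw [laplacian, Finset.sum_congr rfl fun i _ => hterm i, Finset.sum_add_distrib,
    ← Finset.mul_sum, hnorm]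
  simp
  field_simp
  ring

/-- A power of order `2 + ε` eventually dominates every multiple of the square. -/
theorem eventually_mul_sq_le_mul_rpow_sub {ε e₁ e₂ : ℝ} (hε : 0 < ε) (he₁ : 0 < e₁)
    (he₂ : 0 ≤ e₂) (A : ℝ) :
    ∀ᶠ r : ℝ in atTop, A * r ^ 2 ≤ e₁ * r ^ ((2 : ℝ) + ε) - e₂ := by
  filter_upwards [eventually_ge_atTop 1,
    (tendsto_rpow_atTop hε).eventually_ge_atTop ((A + e₂) / e₁)] with r hr hrε
  have hr0 : 0 < r := by linarith
  rw [Real.rpow_add hr0, Real.rpow_two]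
  have h₁ : A + e₂ ≤ r ^ ε * e₁ := (div_le_iff₀ he₁).1 hrε
  have h₂ : 1 ≤ r ^ 2 := one_le_pow₀ hr
  nlinarith [mul_le_mul_of_nonneg_left h₁ (sq_nonneg r), mul_le_mul_of_nonneg_left h₂ he₂]

/-- A subsolution of `Δ φ ≥ ‖x‖² φ` outside a ball that vanishes at infinity has Gaussian decay. -/
theorem exists_le_mul_exp_neg_sq {n : ℕ} {φ : EuclideanSpace ℝ (Fin n) → ℝ}
    (hφ : ContDiff ℝ 2 φ) (hφ_decay : Tendsto φ (cocompact _) (𝓝 0)) {ρ : ℝ} (hρ : 0 < ρ)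
    (hlap : ∀ x, ρ < ‖x‖ → 0 < φ x → ‖x‖ ^ 2 * φ x ≤ laplacian φ x) :
    ∃ M, 0 < M ∧ ∀ x, ρ ≤ ‖x‖ → φ x ≤ M * Real.exp (-‖x‖ ^ 2 / 2) := by
  obtain ⟨B, hB⟩ := (isCompact_sphere (0 : EuclideanSpace ℝ (Fin n)) ρ).bddAbove_image
    hφ.continuous.continuousOn
  set M : ℝ := max B 1 * Real.exp (ρ ^ 2 / 2) with hM
  have hMpos : 0 < M := by positivity
  set h : ℝ → ℝ := fun r => M * Real.exp (-r ^ 2 / 2) with hh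
  have hpos (r : ℝ) : 0 < h r := by positivity
  have hh₁ (r : ℝ) : HasDerivAt h (-r * h r) r := by
    refine ((((hasDerivAt_id r).pow 2).neg.div_const 2).exp.const_mul M).congr_deriv ?_
    simp [hh]
    ring
  have hh₂ (r : ℝ) : HasDerivAt (fun r => -r * h r) ((r ^ 2 - 1) * h r) r := by
    refine ((hasDerivAt_id r).neg.mul (hh₁ r)).congr_deriv ?_
    simp
    ring
  have hne {x : EuclideanSpace ℝ (Fin n)} (hx : ρ < ‖x‖) : x ≠ 0 :=
    norm_pos_iff.1 (hρ.trans hx)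
  have hφ' : Differentiable ℝ (fderiv ℝ φ) :=
    (hφ.fderiv_right (m := 1) (by norm_num)).differentiable (by norm_num)
  refine ⟨M, hMpos, fun x hx => le_of_laplacian_lt_on_exterior (v := fun y => h ‖y‖)
    hφ.continuous (by fun_prop) (fun y _ => (hφ.differentiable (by norm_num)) y) (fun y _ => hφ' y)
    (fun y hy => ((hh₁ _).comp_norm (hne hy)).differentiableAt)
    (fun y hy => differentiableAt_fderiv_comp_norm (hne hy) (fun r _ => hh₁ r) (hh₂ _))
    hφ_decay (fun y => (hpos _).le) (fun y hy => ?_) (fun y hy hlt => ?_) hx⟩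
  · have : φ y ≤ B := hB ⟨y, by simpa using hy, rfl⟩
    have hval : h ‖y‖ = max B 1 := by
      simp only [hh, hM, hy]
      rw [mul_assoc, ← Real.exp_add]
      ring_nf
      simp
    exact this.trans (hval ▸ le_max_left _ _)
  · rw [laplacian_comp_norm (hne hy) (fun r _ => hh₁ r) (hh₂ _)]
    have hy0 : 0 < ‖y‖ := hρ.trans hy
    have hlow := hlap y hy ((hpos _).trans hlt)
    have hsq : ‖y‖ ^ 2 * h ‖y‖ < ‖y‖ ^ 2 * φ y := by gcongr
    have hn : 0 ≤ (n : ℝ) * h ‖y‖ := mul_nonneg n.cast_nonneg (hpos _).le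
    have heq : (‖y‖ ^ 2 - 1) * h ‖y‖ + (n - 1) / ‖y‖ * (-‖y‖ * h ‖y‖) =
        ‖y‖ ^ 2 * h ‖y‖ - n * h ‖y‖ := by
      field_simp
      ring
    linarith

/-- A positive supersolution of `Δ φ ≤ C W φ` outside a ball, with `W` radial and
`W' ≤ e W ^ (3 / 2)`, decays at most like `exp (-a ∫ √W)`. -/
theorem exists_mul_exp_neg_integral_sqrt_le {n : ℕ} {φ : EuclideanSpace ℝ (Fin n) → ℝ}
    (hφ : ContDiff ℝ 2 φ) (hφ_pos : ∀ x, 0 < φ x) {W W' : ℝ → ℝ} (hW : Continuous W)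
    {δ : ℝ} (hδ : 0 < δ) (hδW : ∀ r, δ ≤ W r) (hW' : ∀ r, 0 < r → HasDerivAt W (W' r) r)
    {e C ρ : ℝ} (he : 0 < e) (hC : 0 < C) (hρ : 1 ≤ ρ)
    (hW1 : ∀ r, ρ ≤ r → 1 ≤ W r) (hW'_le : ∀ r, ρ ≤ r → W' r ≤ e * (W r * √(W r)))
    (hlap : ∀ x, ρ < ‖x‖ → laplacian φ x ≤ C * W ‖x‖ * φ x) :
    ∃ a m, 0 < a ∧ 0 < m ∧
      ∀ x, ρ ≤ ‖x‖ → m * Real.exp (-a * ∫ r in (0 : ℝ)..‖x‖, √(W r)) ≤ φ x := by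
  obtain ⟨z, -, hz⟩ := (isCompact_closedBall (0 : EuclideanSpace ℝ (Fin n)) ρ).exists_isMinOn
    ⟨0, by simp; linarith⟩ hφ.continuous.continuousOn
  set m := φ z
  have hm : 0 < m := hφ_pos z
  set a : ℝ := e / 2 + n + C + 1 with ha
  have ha_pos : 0 < a := by positivity
  set F : ℝ → ℝ := fun r => ∫ s in (0 : ℝ)..r, √(W s) with hF
  have hF' (r : ℝ) : HasDerivAt F (√(W r)) r :=
    hW.sqrt.integral_hasStrictDerivAt 0 r |>.hasDerivAt
  have hF_cont : Continuous F := continuous_iff_continuousAt.2 fun r => (hF' r).continuousAt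
  have hF_ge {r : ℝ} (hr : 0 ≤ r) : √δ * r ≤ F r := by
    have := intervalIntegral.integral_mono_on hr
      (intervalIntegrable_const (c := √δ) (μ := volume)) (hW.sqrt.intervalIntegrable 0 r)
      (fun s _ => Real.sqrt_le_sqrt (hδW s))
    simpa [mul_comm] using this
  set h : ℝ → ℝ := fun r => m * Real.exp (-a * F r) with hh
  have hpos (r : ℝ) : 0 < h r := by positivity
  have hh₁ (r : ℝ) : HasDerivAt h (-a * √(W r) * h r) r := by
    refine (((hF' r).const_mul (-a)).exp.const_mul m).congr_deriv ?_
    simp only [hh]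
    ring
  have hh₂ (r : ℝ) (hr : 0 < r) : HasDerivAt (fun r => -a * √(W r) * h r)
      ((a ^ 2 * W r - a * (W' r / (2 * √(W r)))) * h r) r := by
    have hWr : 0 < W r := hδ.trans_le (hδW r)
    refine ((((hW' r hr).sqrt hWr.ne').const_mul (-a)).mul (hh₁ r)).congr_deriv ?_
    linear_combination (a ^ 2 * h r) * Real.mul_self_sqrt hWr.le
  have hne {x : EuclideanSpace ℝ (Fin n)} (hx : ρ < ‖x‖) : x ≠ 0 :=
    norm_pos_iff.1 (by linarith)
  have hφ' : Differentiable ℝ (fderiv ℝ φ) :=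
    (hφ.fderiv_right (m := 1) (by norm_num)).differentiable (by norm_num)
  have hdecay : Tendsto (fun y : EuclideanSpace ℝ (Fin n) => h ‖y‖) (cocompact _) (𝓝 0) := by
    have hF_top : Tendsto F atTop atTop :=
      tendsto_atTop_mono' _ ((eventually_ge_atTop 0).mono fun r hr => hF_ge hr)
        (tendsto_id.const_mul_atTop (Real.sqrt_pos.2 hδ))
    have : Tendsto h atTop (𝓝 0) := by
      simpa [hh, Function.comp_def] using (Real.tendsto_exp_atBot.comp
        (hF_top.const_mul_atTop_of_neg (neg_lt_zero.2 ha_pos))).const_mul m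
    exact this.comp tendsto_norm_cocompact_atTop
  refine ⟨a, m, ha_pos, hm, fun x hx => le_of_laplacian_lt_on_exterior (u := fun y => h ‖y‖)
    (by fun_prop) hφ.continuous
    (fun y hy => ((hh₁ _).comp_norm (hne hy)).differentiableAt)
    (fun y hy => differentiableAt_fderiv_comp_norm (hne hy) (fun r _ => hh₁ r)
      (hh₂ _ (norm_pos_iff.2 (hne hy))))
    (fun y _ => (hφ.differentiable (by norm_num)) y) (fun y _ => hφ' y)
    hdecay (fun y => (hφ_pos y).le) (fun y hy => ?_) (fun y hy hlt => ?_) hx⟩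
  · have hFnonneg : 0 ≤ F ‖y‖ := le_trans (by positivity) (hF_ge (norm_nonneg y))
    have hexp : Real.exp (-a * F ‖y‖) ≤ 1 := Real.exp_le_one_iff.2 (by nlinarith)
    calc h ‖y‖ ≤ m * 1 := by simp only [hh]; gcongr
      _ ≤ φ y := by rw [mul_one]; exact hz (by simp [hy])
  · have hr : 1 ≤ ‖y‖ := by linarith
    rw [laplacian_comp_norm (hne hy) (fun r _ => hh₁ r) (hh₂ _ (by linarith))]
    refine (hlap y hy).trans_lt ?_
    generalize ‖y‖ = r at *
    have hW1r := hW1 r hy.le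
    have hs1 : 1 ≤ √(W r) := Real.one_le_sqrt.2 hW1r
    have hs : √(W r) * √(W r) = W r := Real.mul_self_sqrt (by linarith)
    have hsle : √(W r) ≤ W r := by nlinarith
    have hcurv : W' r / (2 * √(W r)) ≤ e / 2 * W r := by
      rw [div_le_iff₀ (by positivity)]
      linarith [hW'_le r hy.le]
    have hangular : (n - 1) / r * √(W r) ≤ n * W r := by
      have h₁ : ((n : ℝ) - 1) / r ≤ n := by
        rw [div_le_iff₀ (by linarith)]
        nlinarith [n.cast_nonneg (α := ℝ)]
      exact mul_le_mul h₁ hsle (by positivity) n.cast_nonneg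
    have hcoef : C * W r ≤ a ^ 2 * W r - a * (W' r / (2 * √(W r))) -
        a * ((n - 1) / r * √(W r)) := by
      have h₁ := mul_le_mul_of_nonneg_left hcurv ha_pos.le
      have h₂ := mul_le_mul_of_nonneg_left hangular ha_pos.le
      have h₃ : a ^ 2 * W r - a * (e / 2 * W r) - a * (n * W r) = a * (C + 1) * W r := by
        rw [ha]; ring
      have ha1 : 1 ≤ a := by
        have := n.cast_nonneg (α := ℝ)
        linarith
      have h₄ : C * W r ≤ a * (C + 1) * W r := by
        gcongr
        nlinarith
      linarith
    calc C * W r * φ y < C * W r * h r := by gcongr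
      _ ≤ _ * h r := mul_le_mul_of_nonneg_right hcoef (hpos r).le
      _ = _ := by ring

/-- **Lemma 6.4 (two-sided decay bounds for the ground state).**
Let `V(x) = V̄(|x|)` with `V̄` positive, C¹, increasing, `V̄(r) ≥ e₁ r^{2+ε} − e₂` and
`V̄' ≤ e₃ V̄^{3/2}`.  If `φ₀ ∈ C²` is strictly positive, vanishes at infinity, and satisfies
`(c₂ V − c₃) φ₀ ≤ Δφ₀ ≤ C₁ V φ₀` for `|x| ≥ R`, then there are `R' ≥ R`, `a₁, a₂ > 0`,
`a₃, a₄ ∈ ℝ` with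
`exp(−a₁ ∫₀^{|x|} √{V̄(r)} dr + a₃) ≤ φ₀(x)² ≤ exp(−a₂ |x|² + a₄)` for all `|x| ≥ R'`. -/
theorem stmt_10 {n : ℕ} (hn : 1 ≤ n)
    (ε e₁ e₃ : ℝ) (hε : 0 < ε) (he₁ : 0 < e₁) (he₃ : 0 < e₃) (e₂ : ℝ) (he₂ : 0 ≤ e₂)
    (Vbar Vbar' : ℝ → ℝ)
    (hVpos : ∀ r : ℝ, 0 ≤ r → 0 < Vbar r)
    (hVderiv : ∀ r : ℝ, 0 ≤ r → HasDerivWithinAt Vbar (Vbar' r) (Set.Ici 0) r)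
    (hVderiv_cont : ContinuousOn Vbar' (Set.Ici 0))
    (hVmono : MonotoneOn Vbar (Set.Ici 0))
    (hVgrowth : ∀ r : ℝ, 0 ≤ r → e₁ * r ^ ((2 : ℝ) + ε) - e₂ ≤ Vbar r)
    (hV'bound : ∀ r : ℝ, 0 ≤ r → Vbar' r ≤ e₃ * Vbar r ^ ((3 : ℝ) / 2))
    (V : EuclideanSpace ℝ (Fin n) → ℝ) (hV : ∀ x, V x = Vbar ‖x‖)
    (φ₀ : EuclideanSpace ℝ (Fin n) → ℝ) (hφC2 : ContDiff ℝ 2 φ₀)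
    (hφpos : ∀ x, 0 < φ₀ x)
    (hφdecay : Filter.Tendsto φ₀ (Filter.cocompact _) (nhds 0))
    (R C₁ c₂ c₃ : ℝ) (hR : 0 ≤ R) (hC₁ : 0 < C₁) (hc₂ : 0 < c₂) (hc₃ : 0 ≤ c₃)
    (hlower : ∀ x : EuclideanSpace ℝ (Fin n), R ≤ ‖x‖ →
      (c₂ * V x - c₃) * φ₀ x ≤ laplacian φ₀ x)
    (hupper : ∀ x : EuclideanSpace ℝ (Fin n), R ≤ ‖x‖ →
      laplacian φ₀ x ≤ C₁ * V x * φ₀ x) :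
    ∃ (R' : ℝ), R ≤ R' ∧ ∃ (a₁ a₂ : ℝ), 0 < a₁ ∧ 0 < a₂ ∧ ∃ (a₃ a₄ : ℝ),
      ∀ x : EuclideanSpace ℝ (Fin n), R' ≤ ‖x‖ →
        Real.exp (-a₁ * (∫ r in (0 : ℝ)..‖x‖, Real.sqrt (Vbar r)) + a₃) ≤ φ₀ x ^ 2 ∧
        φ₀ x ^ 2 ≤ Real.exp (-a₂ * ‖x‖ ^ 2 + a₄) := by
  have hev := eventually_mul_sq_le_mul_rpow_sub hε he₁ he₂ (1 + 1 / c₂ + c₃ / c₂)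
  obtain ⟨ρ, hρgrowth, hρ1, hρR⟩ :=
    ((eventually_forall_ge_atTop.2 hev).and
      ((eventually_ge_atTop 1).and (eventually_ge_atTop R))).exists
  have hVlarge (r : ℝ) (hr : ρ ≤ r) : (1 + 1 / c₂ + c₃ / c₂) * r ^ 2 ≤ Vbar r :=
    (hρgrowth r hr).trans (hVgrowth r (by linarith))
  have hsq (r : ℝ) (hr : ρ ≤ r) : 1 ≤ r ^ 2 := one_le_pow₀ (hρ1.trans hr)
  have hV1 (r : ℝ) (hr : ρ ≤ r) : 1 ≤ Vbar r := by
    refine le_trans ?_ (hVlarge r hr)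
    have : 0 ≤ 1 / c₂ + c₃ / c₂ := by positivity
    nlinarith [hsq r hr]
  have hVsq (r : ℝ) (hr : ρ ≤ r) : r ^ 2 ≤ c₂ * Vbar r - c₃ := by
    have h₁ := mul_le_mul_of_nonneg_left (hVlarge r hr) hc₂.le
    have h₂ : c₂ * ((1 + 1 / c₂ + c₃ / c₂) * r ^ 2) = c₂ * r ^ 2 + r ^ 2 + c₃ * r ^ 2 := by
      field_simp
    nlinarith [mul_le_mul_of_nonneg_left (hsq r hr) hc₃, mul_nonneg hc₂.le (sq_nonneg r)]
  obtain ⟨M, hM, hφ_le⟩ := exists_le_mul_exp_neg_sq hφC2 hφdecay (by linarith : 0 < ρ)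
    (fun x hx _ => le_trans
      (mul_le_mul_of_nonneg_right (hVsq _ hx.le) (hφpos x).le)
      (by simpa [hV] using hlower x (by linarith)))
  have hV_contOn : ContinuousOn Vbar (Set.Ici 0) := fun r hr => (hVderiv r hr).continuousWithinAt
  set W : ℝ → ℝ := fun r => Vbar (max r 0)
  have hW_eq {r : ℝ} (hr : 0 ≤ r) : W r = Vbar r := by simp [W, hr]
  obtain ⟨a, m, ha, hm, hφ_ge⟩ := exists_mul_exp_neg_integral_sqrt_le (W := W) (W' := Vbar')
    hφC2 hφpos (hV_contOn.comp_continuous (by fun_prop) fun r => le_max_right r 0)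
    (hVpos 0 le_rfl) (fun r => hVmono Set.self_mem_Ici (le_max_right r 0) (le_max_right r 0))
    (fun r hr => ((hVderiv r hr.le).hasDerivAt (Ici_mem_nhds hr)).congr_of_eventuallyEq
      ((lt_mem_nhds hr).mono fun s hs => hW_eq hs.le))
    he₃ hC₁ hρ1 (fun r hr => by rw [hW_eq (by linarith)]; exact hV1 r hr)
    (fun r hr => by
      have hr0 : 0 ≤ r := by linarith
      have hpow : Vbar r ^ ((3 : ℝ) / 2) = Vbar r * √(Vbar r) := by
        rw [Real.sqrt_eq_rpow, show (3 : ℝ) / 2 = 1 + 1 / 2 by norm_num,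
          Real.rpow_add (hVpos r hr0), Real.rpow_one]
      rw [hW_eq hr0, ← hpow]
      exact hV'bound r hr0)
    (fun x hx => by
      rw [hW_eq (norm_nonneg x), ← hV]
      exact hupper x (by linarith))
  refine ⟨ρ, hρR, 2 * a, 1, by positivity, one_pos, 2 * Real.log m, 2 * Real.log M,
    fun x hx => ⟨?_, ?_⟩⟩
  · have hint : ∫ r in (0 : ℝ)..‖x‖, √(W r) = ∫ r in (0 : ℝ)..‖x‖, √(Vbar r) := by
      refine intervalIntegral.integral_congr fun r hr => ?_
      rw [Set.uIcc_of_le (norm_nonneg x)] at hr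
      simp only [hW_eq hr.1]
    have hle := hφ_ge x hx
    rw [hint] at hle
    calc _ = (m * Real.exp (-a * ∫ r in (0 : ℝ)..‖x‖, √(Vbar r))) ^ 2 := by
          nth_rewrite 2 [← Real.exp_log hm]
          rw [← Real.exp_add, ← Real.exp_nat_mul]
          congr 1
          push_cast
          ring
      _ ≤ φ₀ x ^ 2 := by gcongr
  · calc φ₀ x ^ 2 ≤ (M * Real.exp (-‖x‖ ^ 2 / 2)) ^ 2 := by
          gcongr
          exacts [(hφpos x).le, hφ_le x hx]
      _ = _ := by
          nth_rewrite 1 [← Real.exp_log hM]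
          rw [← Real.exp_add, ← Real.exp_nat_mul]
          congr 1
          push_cast
          ring
end

section
/- Let Ω₁ and Ω₂ be Polish spaces with their Borel σ-algebras, let ℙ be a probability measure on Ω₁ × Ω₂, and let ℚ₁, ℚ₂ be probability measures on Ω₁ and Ω₂ respectively. Assume ℙ is absolutely continuous with respect to the product measure ℚ₁ ⊗ ℚ₂. Then ℋ(ℙ | ℚ₁⊗ℚ₂) ≥ ℋ(ℙ₁ | ℚ₁) + ℋ(ℙ₂ | ℚ₂), where ℙ₁ and ℙ₂ are the two marginals of ℙ (its pushforwards under the coordinate projections). -/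
open MeasureTheory
open scoped Classical

/-- The relative entropy (Kullback–Leibler divergence) `ℋ(P|Q) = ∫ log (dP/dQ) dP`,
with value `+∞` when `P` is not absolutely continuous with respect to `Q` (or when the
log-likelihood ratio is not integrable). -/
noncomputable def relEntropy {Ω : Type*} [MeasurableSpace Ω] (P Q : Measure Ω) : EReal :=
  if P ≪ Q ∧ Integrable (llr P Q) P then ((∫ x, llr P Q x ∂P : ℝ) : EReal) else ⊤

open ProbabilityTheory InformationTheory

/-- For probability measures, `relEntropy` is Mathlib's `klDiv`, seen in `EReal`. -/
lemma relEntropy_eq_klDiv {Ω : Type*} [MeasurableSpace Ω] (P Q : Measure Ω)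
    [IsProbabilityMeasure P] [IsProbabilityMeasure Q] :
    relEntropy P Q = (klDiv P Q : EReal) := by
  unfold relEntropy
  split_ifs with h
  · rw [← toReal_klDiv_of_measure_eq h.1 (by simp),
      EReal.coe_ennreal_toReal (klDiv_ne_top h.1 h.2)]
  · have h_top : klDiv P Q = ⊤ := by
      by_contra hne
      exact h (klDiv_ne_top_iff.mp hne)
    rw [h_top, EReal.coe_ennreal_top]

/-- The Kullback–Leibler divergence with respect to a product probability measure is at least
the sum of the divergences of the marginals. -/
lemma klDiv_fst_add_klDiv_snd_le {Ω₁ Ω₂ : Type*} [MeasurableSpace Ω₁] [MeasurableSpace Ω₂]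
    [StandardBorelSpace Ω₂] [Nonempty Ω₂] (P : Measure (Ω₁ × Ω₂))
    [IsProbabilityMeasure P]
    (Q₁ : Measure Ω₁) [IsFiniteMeasure Q₁] (Q₂ : Measure Ω₂) [IsProbabilityMeasure Q₂] :
    klDiv P.fst Q₁ + klDiv P.snd Q₂ ≤ klDiv P (Q₁.prod Q₂) := by
  have h_chain : klDiv P (Q₁.prod Q₂) = klDiv P.fst Q₁ + klDiv P (P.fst.prod Q₂) := by
    have h := klDiv_compProd_eq_add (μ := P.fst) (ν := Q₁) (κ := P.condKernel)
      (η := Kernel.const Ω₁ Q₂)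
    rwa [P.disintegrate P.condKernel, Measure.compProd_const, Measure.compProd_const] at h
  have h_snd : klDiv P.snd Q₂ ≤ klDiv P (P.fst.prod Q₂) := by
    have h := klDiv_map_le (μ := P) (ν := P.fst.prod Q₂) measurable_snd
    rwa [← Measure.snd, ← Measure.snd, Measure.snd_prod] at h
  rw [h_chain]
  gcongr

/-- **Lemma 7.9 (superadditivity of relative entropy).**  For a probability measure `ℙ` on a
product of Polish spaces and product reference probability measure `ℚ₁ ⊗ ℚ₂`, with
`ℙ ≪ ℚ₁ ⊗ ℚ₂`, the relative entropy dominates the sum of the relative entropies of the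
marginals: `ℋ(ℙ | ℚ₁⊗ℚ₂) ≥ ℋ(ℙ₁ | ℚ₁) + ℋ(ℙ₂ | ℚ₂)`. -/
theorem stmt_12 {Ω₁ Ω₂ : Type*}
    [TopologicalSpace Ω₁] [PolishSpace Ω₁] [MeasurableSpace Ω₁] [BorelSpace Ω₁]
    [TopologicalSpace Ω₂] [PolishSpace Ω₂] [MeasurableSpace Ω₂] [BorelSpace Ω₂]
    (P : Measure (Ω₁ × Ω₂)) [IsProbabilityMeasure P]
    (Q₁ : Measure Ω₁) [IsProbabilityMeasure Q₁]
    (Q₂ : Measure Ω₂) [IsProbabilityMeasure Q₂]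
    (hac : P ≪ Q₁.prod Q₂) :
    relEntropy (P.map Prod.fst) Q₁ + relEntropy (P.map Prod.snd) Q₂ ≤
      relEntropy P (Q₁.prod Q₂) := by
  have : Nonempty Ω₂ := Q₂.nonempty_of_neZero
  have : IsProbabilityMeasure (P.map Prod.fst) := inferInstanceAs (IsProbabilityMeasure P.fst)
  have : IsProbabilityMeasure (P.map Prod.snd) := inferInstanceAs (IsProbabilityMeasure P.snd)
  rw [relEntropy_eq_klDiv, relEntropy_eq_klDiv, relEntropy_eq_klDiv, ← EReal.coe_ennreal_add,
    EReal.coe_ennreal_le_coe_ennreal_iff]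
  exact klDiv_fst_add_klDiv_snd_le P Q₁ Q₂
end

section
/- Let Ω be a Polish space with its Borel σ-algebra, let N ≥ k ≥ 1 be integers, let ℙ be a probability measure on Ω^N invariant under the action of all permutations of the N coordinates, and let ℚ be a probability measure on Ω. Let ℙ^{(k)} denote the marginal of ℙ on the first k coordinates and m := ⌊N/k⌋. Then m · ℋ(ℙ^{(k)} | ℚ^{⊗k}) ≤ ℋ(ℙ | ℚ^{⊗N}). -/
open MeasureTheory
open scoped Classical

open ProbabilityTheory InformationTheory

lemma relEntropy_eq_coe_klDiv {α : Type*} [MeasurableSpace α] (μ ν : Measure α)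
    [IsProbabilityMeasure μ] [IsProbabilityMeasure ν] :
    relEntropy μ ν = (klDiv μ ν : EReal) := by
  unfold relEntropy
  split_ifs with h
  · rw [← toReal_klDiv_of_measure_eq h.1 (by simp),
      ← EReal.toReal_coe_ennreal]
    exact EReal.coe_toReal (by simpa using klDiv_ne_top h.1 h.2) (by simp)
  · rw [not_and] at h
    rw [klDiv_eq_top_iff.mpr h, EReal.coe_ennreal_top]

/-- Superadditivity of the Kullback–Leibler divergence with respect to a product measure. -/
lemma klDiv_fst_add_klDiv_snd_le_s13 {α β : Type*} [MeasurableSpace α] [MeasurableSpace β]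
    [StandardBorelSpace β] [Nonempty β] (ρ : Measure (α × β)) [IsProbabilityMeasure ρ]
    (μ : Measure α) [IsFiniteMeasure μ] (ν : Measure β) [IsProbabilityMeasure ν] :
    klDiv ρ.fst μ + klDiv ρ.snd ν ≤ klDiv ρ (μ.prod ν) := by
  have chain := klDiv_compProd_eq_add ρ.fst μ ρ.condKernel (Kernel.const α ν)
  rw [ρ.disintegrate ρ.condKernel, Measure.compProd_const, Measure.compProd_const] at chain
  rw [chain]
  gcongr
  calc klDiv ρ.snd ν = klDiv (ρ.map Prod.snd) ((ρ.fst.prod ν).map Prod.snd) := by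
        rw [← Measure.snd, ← Measure.snd, Measure.snd_prod]
    _ ≤ klDiv ρ (ρ.fst.prod ν) := klDiv_map_le _ _ measurable_snd

/-- The divergences of the one-dimensional marginals from the factors of a product measure sum to
at most the divergence from the product. -/
lemma sum_klDiv_map_eval_le_klDiv_pi {α : Type*} [MeasurableSpace α] [StandardBorelSpace α]
    (ν : Measure α) [IsProbabilityMeasure ν] (m : ℕ) (ρ : Measure (Fin m → α))
    [IsProbabilityMeasure ρ] :
    ∑ i, klDiv (ρ.map (Function.eval i)) ν ≤ klDiv ρ (Measure.pi fun _ => ν) := by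
  have : Nonempty α := nonempty_of_isProbabilityMeasure ν
  induction m with
  | zero => simp
  | succ m ih =>
    let e := MeasurableEquiv.piFinSuccAbove (fun _ : Fin (m + 1) => α) 0
    have he : Measurable e := e.measurable
    have : IsProbabilityMeasure (ρ.map e) := Measure.isProbabilityMeasure_map he.aemeasurable
    have hfst : (ρ.map e).fst = ρ.map (Function.eval 0) := by
      rw [Measure.fst, Measure.map_map measurable_fst he]
      rfl
    have hsnd (i : Fin m) :
        (ρ.map e).snd.map (Function.eval i) = ρ.map (Function.eval i.succ) := by
      rw [Measure.snd, Measure.map_map measurable_snd he,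
        Measure.map_map (measurable_pi_apply i) (measurable_snd.comp he)]
      rfl
    calc ∑ i, klDiv (ρ.map (Function.eval i)) ν
        = klDiv (ρ.map e).fst ν + ∑ i, klDiv ((ρ.map e).snd.map (Function.eval i)) ν := by
          simp_rw [Fin.sum_univ_succ, hfst, hsnd]
      _ ≤ klDiv (ρ.map e).fst ν + klDiv (ρ.map e).snd (Measure.pi fun _ => ν) := by
          gcongr
          exact ih _
      _ ≤ klDiv (ρ.map e) (ν.prod (Measure.pi fun _ => ν)) :=
          klDiv_fst_add_klDiv_snd_le_s13 _ _ _
      _ = klDiv (ρ.map e) ((Measure.pi fun _ => ν).map e) := by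
          rw [(measurePreserving_piFinSuccAbove (fun _ : Fin (m + 1) => ν) 0).map_eq]
      _ ≤ klDiv ρ (Measure.pi fun _ => ν) := klDiv_map_le _ _ he

/-- Disjoint blocks of coordinates of a power measure form a power of the block power measure. -/
lemma pi_map_blocks {α ι κ τ : Type*} [MeasurableSpace α] [Fintype ι] [Fintype κ] [Fintype τ]
    (ν : Measure α) [IsProbabilityMeasure ν] {f : ι × κ → τ} (hf : f.Injective) :
    (Measure.pi fun _ : τ => ν).map (fun x i j => x (f (i, j))) =
      Measure.pi fun _ : ι => Measure.pi fun _ : κ => ν := by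
  simp_rw [← Measure.infinitePi_eq_pi]
  rw [← Measure.infinitePi_map_curry fun _ _ => ν,
    ← Measure.map_infinitePi_infinitePi_of_inj (P := fun _ => ν) hf,
    Measure.map_map (MeasurableEquiv.measurable _) (by fun_prop)]
  rfl

/-- All marginals of an exchangeable measure along injections from a given index set agree. -/
lemma map_comp_injective_eq_of_exchangeable {α κ τ : Type*} [MeasurableSpace α] [Finite κ]
    {μ : Measure (τ → α)} (hμ : ∀ σ : Equiv.Perm τ, μ.map (fun x => x ∘ σ) = μ)
    {f g : κ → τ} (hf : f.Injective) (hg : g.Injective) :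
    μ.map (fun x j => x (f j)) = μ.map (fun x j => x (g j)) := by
  obtain ⟨σ, hσ⟩ := Equiv.Perm.exists_extending_pair g f hg hf
  conv_rhs => rw [← hμ σ]
  rw [Measure.map_map (g := fun (x : τ → α) j => x (g j)) (by fun_prop)
    (measurable_pi_lambda _ fun i => measurable_pi_apply _)]
  congr 1
  ext x j
  simp [hσ]

/-- **Key step in the proof of Theorem 7.2.**  For a permutation-invariant probability
measure `ℙ` on `Ω^N` (`Ω` Polish) and a reference probability measure `ℚ` on `Ω`, the
marginal `ℙ^{(k)}` of `ℙ` on the first `k` coordinates satisfies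
`⌊N/k⌋ · ℋ(ℙ^{(k)} | ℚ^{⊗k}) ≤ ℋ(ℙ | ℚ^{⊗N})`. -/
theorem stmt_13 {Ω : Type*}
    [TopologicalSpace Ω] [PolishSpace Ω] [MeasurableSpace Ω] [BorelSpace Ω]
    (N k : ℕ) (hk : 1 ≤ k) (hkN : k ≤ N)
    (P : Measure (Fin N → Ω)) [IsProbabilityMeasure P]
    (hsym : ∀ σ : Equiv.Perm (Fin N), P.map (fun x => x ∘ σ) = P)
    (Q : Measure Ω) [IsProbabilityMeasure Q] :
    ((N / k : ℕ) : EReal) *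
        relEntropy (P.map fun (x : Fin N → Ω) (i : Fin k) => x (Fin.castLE hkN i))
          (Measure.pi fun _ : Fin k => Q) ≤
      relEntropy P (Measure.pi fun _ : Fin N => Q) := by
  have hmN : N / k * k ≤ N := Nat.div_mul_le_self N k
  let f : Fin (N / k) × Fin k → Fin N := fun p => Fin.castLE hmN (finProdFinEquiv p)
  have hf : f.Injective := (Fin.castLE_injective hmN).comp finProdFinEquiv.injective
  let blocks : (Fin N → Ω) → Fin (N / k) → Fin k → Ω := fun x i j => x (f (i, j))
  have hblocks : Measurable blocks := by fun_prop
  let marginal := P.map fun (x : Fin N → Ω) (i : Fin k) => x (Fin.castLE hkN i)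
  have : IsProbabilityMeasure marginal := Measure.isProbabilityMeasure_map
    (Measurable.aemeasurable (by fun_prop))
  have : IsProbabilityMeasure (P.map blocks) :=
    Measure.isProbabilityMeasure_map hblocks.aemeasurable
  have hmarginal (i : Fin (N / k)) : (P.map blocks).map (Function.eval i) = marginal := by
    rw [Measure.map_map (measurable_pi_apply i) hblocks]
    exact map_comp_injective_eq_of_exchangeable hsym
      (hf.comp (Prod.mk_right_injective i)) (Fin.castLE_injective hkN)
  have key : ((N / k : ℕ) : ENNReal) * klDiv marginal (Measure.pi fun _ : Fin k => Q) ≤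
      klDiv P (Measure.pi fun _ : Fin N => Q) :=
    calc ((N / k : ℕ) : ENNReal) * klDiv marginal (Measure.pi fun _ : Fin k => Q)
        = ∑ i, klDiv ((P.map blocks).map (Function.eval i)) (Measure.pi fun _ : Fin k => Q) := by
          simp [hmarginal]
      _ ≤ klDiv (P.map blocks) (Measure.pi fun _ => Measure.pi fun _ : Fin k => Q) :=
          sum_klDiv_map_eval_le_klDiv_pi _ _ _
      _ = klDiv (P.map blocks) ((Measure.pi fun _ => Q).map blocks) := by
          rw [pi_map_blocks Q hf]
      _ ≤ klDiv P (Measure.pi fun _ => Q) := klDiv_map_le _ _ hblocks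
  rw [relEntropy_eq_coe_klDiv, relEntropy_eq_coe_klDiv P]
  have hcast : ((N / k : ℕ) : EReal) = (((N / k : ℕ) : ENNReal) : EReal) := rfl
  rw [hcast, ← EReal.coe_ennreal_mul]
  exact EReal.coe_ennreal_le_coe_ennreal_iff.mpr key
end

section
/- Let Ω be a separable Banach space with its Borel σ-algebra, let P and Q be Borel probability measures on Ω, and let 1 ≤ p < k be real numbers with finite moments M_k(P) := ∫ ‖x‖^k dP(x) < ∞ and M_k(Q) := ∫ ‖x‖^k dQ(x) < ∞. Then there exists a Borel probability measure π on Ω × Ω with first marginal P and second marginal Q such that ( ∫ ‖x−y‖^p dπ(x,y) )^{1/p} ≤ 2^{1−1/p} · (M_k(P) + M_k(Q))^{1/k} · ( 2·d_{TV}(P,Q) )^{(k−p)/(kp)}. -/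
open MeasureTheory

/-- The total variation distance between two measures:
`d_TV(P,Q) = sup_A |P(A) − Q(A)|` over measurable sets `A`. -/
noncomputable def tvDist {Ω : Type*} [MeasurableSpace Ω] (P Q : Measure Ω) : ℝ :=
  sSup {d : ℝ | ∃ A : Set Ω, MeasurableSet A ∧ d = |(P A).toReal - (Q A).toReal|}

/-- Two probability measures have a common part such that the two remainders have the same mass,
and this mass is at most the total variation distance. -/
lemma exists_common_part_mass_le_tvDist {Ω : Type*} [MeasurableSpace Ω] (P Q : Measure Ω)
    [IsProbabilityMeasure P] [IsProbabilityMeasure Q] :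
    ∃ m α β : Measure Ω, m + α = P ∧ m + β = Q ∧ α Set.univ = β Set.univ ∧
      (α Set.univ).toReal ≤ tvDist P Q := by
  obtain ⟨S, hS, hQP, hPQ⟩ := hahn_decomposition P Q
  set m : Measure Ω := Q.restrict S + P.restrict Sᶜ with hm
  have hmP : m ≤ P := by
    refine Measure.le_intro fun t ht _ => ?_
    rw [hm, Measure.add_apply, Measure.restrict_apply ht, Measure.restrict_apply ht,
      ← measure_inter_add_sdiff t hS, Set.sdiff_eq]
    exact add_le_add_left (hQP _ (ht.inter hS) Set.inter_subset_right) _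
  have hmQ : m ≤ Q := by
    refine Measure.le_intro fun t ht _ => ?_
    rw [hm, Measure.add_apply, Measure.restrict_apply ht, Measure.restrict_apply ht,
      ← measure_inter_add_sdiff t hS, Set.sdiff_eq]
    exact add_le_add_right (hPQ _ (ht.inter hS.compl) Set.inter_subset_right) _
  have : IsFiniteMeasure m := isFiniteMeasure_of_le P hmP
  have hα : m + (P - m) = P := by rw [add_comm, Measure.sub_add_cancel_of_le hmP]
  have hβ : m + (Q - m) = Q := by rw [add_comm, Measure.sub_add_cancel_of_le hmQ]
  refine ⟨m, P - m, Q - m, hα, hβ, ?_, ?_⟩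
  · rw [Measure.sub_apply MeasurableSet.univ hmP, Measure.sub_apply MeasurableSet.univ hmQ,
      measure_univ (μ := P), measure_univ (μ := Q)]
  · have hmass : (P - m).real Set.univ = P.real S - Q.real S := by
      have h1 : m.real Set.univ + (P - m).real Set.univ = 1 := by
        rw [← measureReal_add_apply, hα, probReal_univ]
      have h2 : m.real Set.univ = Q.real S + P.real Sᶜ := by
        rw [hm, measureReal_add_apply, measureReal_restrict_apply MeasurableSet.univ,
          measureReal_restrict_apply MeasurableSet.univ, Set.univ_inter, Set.univ_inter]
      have h3 := probReal_add_probReal_compl (μ := P) hS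
      linarith
    calc ((P - m) Set.univ).toReal = P.real S - Q.real S := hmass
      _ ≤ |P.real S - Q.real S| := le_abs_self _
      _ ≤ tvDist P Q := by
        refine le_csSup ⟨1, ?_⟩ ⟨S, hS, rfl⟩
        rintro _ ⟨A, -, rfl⟩
        have hP : P.real A ≤ 1 := measureReal_le_one
        have hQ : Q.real A ≤ 1 := measureReal_le_one
        have hP0 : 0 ≤ P.real A := measureReal_nonneg
        have hQ0 : 0 ≤ Q.real A := measureReal_nonneg
        change |P.real A - Q.real A| ≤ 1
        exact abs_le.2 ⟨by linarith, by linarith⟩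

/-- Finite measures of equal mass have a coupling. -/
lemma exists_coupling_of_measure_univ_eq {Ω : Type*} [MeasurableSpace Ω] (α β : Measure Ω)
    [IsFiniteMeasure α] [IsFiniteMeasure β] (h : α Set.univ = β Set.univ) :
    ∃ γ : Measure (Ω × Ω), γ.map Prod.fst = α ∧ γ.map Prod.snd = β := by
  by_cases h0 : α Set.univ = 0
  · have hα : α = 0 := Measure.measure_univ_eq_zero.1 h0
    have hβ : β = 0 := Measure.measure_univ_eq_zero.1 (h ▸ h0)
    exact ⟨0, by simp [hα], by simp [hβ]⟩
  · refine ⟨(α Set.univ)⁻¹ • α.prod β, ?_, ?_⟩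
    · rw [Measure.map_smul, Measure.map_fst_prod, smul_smul, ← h,
        ENNReal.inv_mul_cancel h0 (measure_ne_top _ _), one_smul]
    · rw [Measure.map_smul, Measure.map_snd_prod, smul_smul,
        ENNReal.inv_mul_cancel h0 (measure_ne_top _ _), one_smul]

/-- The `p`-transport cost of a coupling is controlled by the `p`-th moments of its marginals. -/
lemma lintegral_enorm_sub_rpow_le_of_marginals {Ω : Type*} [NormedAddCommGroup Ω]
    [MeasurableSpace Ω] [BorelSpace Ω] {α β : Measure Ω} {γ : Measure (Ω × Ω)}
    (hα : γ.map Prod.fst = α) (hβ : γ.map Prod.snd = β) {p : ℝ} (hp : 1 ≤ p) :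
    ∫⁻ z, ‖z.1 - z.2‖ₑ ^ p ∂γ ≤ 2 ^ (p - 1) * ∫⁻ x, ‖x‖ₑ ^ p ∂(α + β) := by
  have hmeas : Measurable fun x : Ω => ‖x‖ₑ ^ p := by fun_prop
  calc ∫⁻ z, ‖z.1 - z.2‖ₑ ^ p ∂γ
      ≤ ∫⁻ z, 2 ^ (p - 1) * (‖z.1‖ₑ ^ p + ‖z.2‖ₑ ^ p) ∂γ := by
        refine lintegral_mono fun z => ?_
        exact (ENNReal.rpow_le_rpow enorm_sub_le (by linarith)).trans
          (ENNReal.rpow_add_le_mul_rpow_add_rpow _ _ hp)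
    _ = 2 ^ (p - 1) * ∫⁻ x, ‖x‖ₑ ^ p ∂(α + β) := by
        rw [lintegral_const_mul _ (by fun_prop), lintegral_add_left (by fun_prop),
          lintegral_add_measure, ← hα, ← hβ, lintegral_map hmeas measurable_fst,
          lintegral_map hmeas measurable_snd]

/-- Transport cost of the coupling that leaves the common part of the two measures in place. -/
lemma exists_coupling_lintegral_le {Ω : Type*} [NormedAddCommGroup Ω]
    [SecondCountableTopology Ω] [MeasurableSpace Ω] [BorelSpace Ω] (P Q : Measure Ω)
    [IsProbabilityMeasure P] [IsProbabilityMeasure Q] {p k : ℝ} (hp : 1 ≤ p) (hpk : p < k) :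
    ∃ π : Measure (Ω × Ω), π.map Prod.fst = P ∧ π.map Prod.snd = Q ∧
      (∫⁻ z, ‖z.1 - z.2‖ₑ ^ p ∂π) ^ (1 / p) ≤
        2 ^ (1 - 1 / p) * (∫⁻ x, ‖x‖ₑ ^ k ∂(P + Q)) ^ (1 / k) *
          ENNReal.ofReal (2 * tvDist P Q) ^ ((k - p) / (k * p)) := by
  obtain ⟨m, α, β, hα, hβ, hmass, htv⟩ := exists_common_part_mass_le_tvDist P Q
  have hαP : α ≤ P := hα ▸ Measure.le_add_left le_rfl
  have hβQ : β ≤ Q := hβ ▸ Measure.le_add_left le_rfl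
  have : IsFiniteMeasure α := isFiniteMeasure_of_le P hαP
  have : IsFiniteMeasure β := isFiniteMeasure_of_le Q hβQ
  obtain ⟨γ, hγα, hγβ⟩ := exists_coupling_of_measure_univ_eq α β hmass
  have hdiag : Measurable fun x : Ω => (x, x) := by fun_prop
  have hp0 : 0 < p := by linarith
  have hk0 : 0 < k := by linarith
  refine ⟨m.map (fun x => (x, x)) + γ, ?_, ?_, ?_⟩
  · rw [Measure.map_add _ _ measurable_fst, hγα, Measure.map_map measurable_fst hdiag]
    simpa [Function.comp_def] using hα
  · rw [Measure.map_add _ _ measurable_snd, hγβ, Measure.map_map measurable_snd hdiag]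
    simpa [Function.comp_def] using hβ
  have hcost : ∫⁻ z, ‖z.1 - z.2‖ₑ ^ p ∂(m.map (fun x => (x, x)) + γ)
      = ∫⁻ z, ‖z.1 - z.2‖ₑ ^ p ∂γ := by
    rw [lintegral_add_measure, lintegral_map (by fun_prop) hdiag]
    simp [hp0]
  have hmassαβ : (α + β) Set.univ ≤ ENNReal.ofReal (2 * tvDist P Q) := by
    rw [Measure.add_apply, ← hmass, ← two_mul, ENNReal.ofReal_mul zero_le_two,
      ENNReal.ofReal_ofNat]
    gcongr
    exact (ENNReal.le_ofReal_iff_toReal_le (measure_ne_top _ _)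
      (ENNReal.toReal_nonneg.trans htv)).2 htv
  have hexp : 1 / p - 1 / k = (k - p) / (k * p) := by field_simp
  have hholder : (∫⁻ x, ‖x‖ₑ ^ p ∂(α + β)) ^ (1 / p) ≤
      (∫⁻ x, ‖x‖ₑ ^ k ∂(α + β)) ^ (1 / k) * (α + β) Set.univ ^ (1 / p - 1 / k) :=
    eLpNorm'_le_eLpNorm'_mul_rpow_measure_univ hp0 hpk.le
      (aestronglyMeasurable_id (α := Ω) (μ := α + β))
  calc _ ≤ (2 ^ (p - 1) * ∫⁻ x, ‖x‖ₑ ^ p ∂(α + β)) ^ (1 / p) := by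
        rw [hcost]
        gcongr
        exact lintegral_enorm_sub_rpow_le_of_marginals hγα hγβ hp
    _ = 2 ^ (1 - 1 / p) * (∫⁻ x, ‖x‖ₑ ^ p ∂(α + β)) ^ (1 / p) := by
        rw [ENNReal.mul_rpow_of_nonneg _ _ (by positivity), ← ENNReal.rpow_mul]
        congr 2
        field_simp
    _ ≤ 2 ^ (1 - 1 / p) * ((∫⁻ x, ‖x‖ₑ ^ k ∂(P + Q)) ^ (1 / k) *
          ENNReal.ofReal (2 * tvDist P Q) ^ ((k - p) / (k * p))) := by
        gcongr
        refine hholder.trans ?_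
        rw [hexp]
        have : 0 ≤ (k - p) / (k * p) := div_nonneg (by linarith) (by positivity)
        gcongr
    _ = _ := (mul_assoc _ _ _).symm

/-- **Corollary 7.6 (coupling form of the moment/total-variation interpolation bound).**
On a separable Banach space, for probability measures `P, Q` with finite `k`-th moments and
`1 ≤ p < k`, there is a coupling `π` of `P` and `Q` with
`(∫ ‖x−y‖^p dπ)^{1/p} ≤ 2^{1−1/p} (M_k(P)+M_k(Q))^{1/k} (2 d_TV(P,Q))^{(k−p)/(kp)}`. -/
theorem stmt_14 {Ω : Type*} [NormedAddCommGroup Ω] [NormedSpace ℝ Ω] [CompleteSpace Ω]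
    [TopologicalSpace.SeparableSpace Ω] [MeasurableSpace Ω] [BorelSpace Ω]
    (P Q : Measure Ω) [IsProbabilityMeasure P] [IsProbabilityMeasure Q]
    (p k : ℝ) (hp : 1 ≤ p) (hpk : p < k)
    (hMP : Integrable (fun x => ‖x‖ ^ k) P)
    (hMQ : Integrable (fun x => ‖x‖ ^ k) Q) :
    ∃ π : Measure (Ω × Ω), IsProbabilityMeasure π ∧
      π.map Prod.fst = P ∧ π.map Prod.snd = Q ∧
      Integrable (fun z : Ω × Ω => ‖z.1 - z.2‖ ^ p) π ∧
      (∫ z : Ω × Ω, ‖z.1 - z.2‖ ^ p ∂π) ^ (1 / p) ≤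
        2 ^ (1 - 1 / p) *
          ((∫ x, ‖x‖ ^ k ∂P) + ∫ x, ‖x‖ ^ k ∂Q) ^ (1 / k) *
          (2 * tvDist P Q) ^ ((k - p) / (k * p)) := by
  have : SecondCountableTopology Ω := UniformSpace.secondCountable_of_separable Ω
  have hp0 : 0 < p := by linarith
  have hk0 : 0 < k := by linarith
  obtain ⟨π, hπP, hπQ, hle⟩ := exists_coupling_lintegral_le P Q hp hpk
  have hprob : IsProbabilityMeasure (π.map Prod.fst) := hπP ▸ inferInstance
  have hπ : IsProbabilityMeasure π := Measure.isProbabilityMeasure_of_map Prod.fst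
  have hnorm (x : Ω) {r : ℝ} (hr : 0 < r) :
      ENNReal.ofReal (‖x‖ ^ r) = ‖x‖ₑ ^ r := by
    rw [← ENNReal.ofReal_rpow_of_nonneg (norm_nonneg x) hr.le, ofReal_norm]
  have hMnonneg : 0 ≤ (∫ x, ‖x‖ ^ k ∂P) + ∫ x, ‖x‖ ^ k ∂Q := by positivity
  have hM : ∫⁻ x, ‖x‖ₑ ^ k ∂(P + Q) =
      ENNReal.ofReal ((∫ x, ‖x‖ ^ k ∂P) + ∫ x, ‖x‖ ^ k ∂Q) := by
    rw [← integral_add_measure hMP hMQ, ofReal_integral_eq_lintegral_ofReal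
      (hMP.add_measure hMQ) (ae_of_all _ fun x => by positivity)]
    simp_rw [hnorm _ hk0]
  have htv : 0 ≤ 2 * tvDist P Q := by
    refine mul_nonneg zero_le_two (Real.sSup_nonneg ?_)
    rintro _ ⟨A, -, rfl⟩
    positivity
  have hexp : 0 ≤ (k - p) / (k * p) := div_nonneg (by linarith) (by positivity)
  have hRHS : (2 : ENNReal) ^ (1 - 1 / p) * (∫⁻ x, ‖x‖ₑ ^ k ∂(P + Q)) ^ (1 / k) *
      ENNReal.ofReal (2 * tvDist P Q) ^ ((k - p) / (k * p)) =
      ENNReal.ofReal (2 ^ (1 - 1 / p) *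
        ((∫ x, ‖x‖ ^ k ∂P) + ∫ x, ‖x‖ ^ k ∂Q) ^ (1 / k) *
        (2 * tvDist P Q) ^ ((k - p) / (k * p))) := by
    rw [hM, ENNReal.ofReal_mul (p := 2 ^ (1 - 1 / p) * _) (by positivity),
      ENNReal.ofReal_mul (p := 2 ^ (1 - 1 / p)) (by positivity),
      ← ENNReal.ofReal_rpow_of_nonneg htv hexp,
      ← ENNReal.ofReal_rpow_of_nonneg hMnonneg (by positivity),
      ← ENNReal.ofReal_rpow_of_pos two_pos, ENNReal.ofReal_ofNat]
  rw [hRHS] at hle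
  have hfin : ∫⁻ z, ‖z.1 - z.2‖ₑ ^ p ∂π ≠ ⊤ := fun htop => by
    rw [htop, ENNReal.top_rpow_of_pos (by positivity)] at hle
    exact ENNReal.ofReal_ne_top (top_le_iff.1 hle)
  have hint : Integrable (fun z : Ω × Ω => ‖z.1 - z.2‖ ^ p) π := by
    have hmeas : Measurable fun z : Ω × Ω => ‖z.1 - z.2‖ ^ p := by fun_prop
    refine (lintegral_ofReal_ne_top_iff_integrable hmeas.aestronglyMeasurable
      (ae_of_all _ fun z => by positivity)).1 ?_
    simpa only [hnorm _ hp0] using hfin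
  refine ⟨π, hπ, hπP, hπQ, hint, ?_⟩
  refine (ENNReal.ofReal_le_ofReal_iff (by positivity)).1 (le_of_eq_of_le ?_ hle)
  rw [← ENNReal.ofReal_rpow_of_nonneg (by positivity) (by positivity),
    ofReal_integral_eq_lintegral_ofReal hint (ae_of_all _ fun z => by positivity)]
  simp_rw [hnorm _ hp0]
end
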